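/- Let M be a C-minimal structure, F = {f_u : u ∈ U} a nice family of functions with domain V and absorbing element e, and g : V → V a definable function with g(e) = e. Then: (1) if u,v ∈ T_g, then the closed ball Λ_{u∧v} = {z ∈ M : ¬C(z,u,v)} is contained in T_g, and moreover there is a cone W with e ∈ W ⊆ V such that Δ(f_u(x), f_z(x), g(x)) holds for all z ∈ Λ_{u∧v} and all x ∈ W; (2) if u ∈ T_g and v ∈ U∖T_g, then the cone Γ = {z ∈ M : C(u,z,v)} of v at u∧v is contained in U∖T_g, and there is a cone W with e ∈ W ⊆ V such that C(f_z(x), f_u(x), g(x)) holds for all z ∈ Γ and all x ∈ W∖{e}; (3) if T_g is nonempty, then it is a ball. -/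

import Mathlib

open FirstOrder Set

universe u

namespace CMinPaper

variable {M : Type u}

/-- The axioms of a (dense) C-relation. -/
def IsCRelation (C : M → M → M → Prop) : Prop :=
  (∀ x y z, C x y z → C x z y) ∧
  (∀ x y z, C x y z → ¬ C y x z) ∧
  (∀ x y z w, C x y z → C x w z ∨ C w y z) ∧
  (∀ x y, x ≠ y → ∃ z, z ≠ y ∧ C x y z)

/-- A cone (open ball). -/
def IsCone (C : M → M → M → Prop) (s : Set M) : Prop :=
  ∃ a b : M, a ≠ b ∧ s = {x | C a x b}

/-- A 0-level set (closed ball). -/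
def IsClosedBall (C : M → M → M → Prop) (s : Set M) : Prop :=
  ∃ a b : M, s = {x | ¬ C x a b}

/-- A ball is a cone or a closed ball. -/
def IsBall (C : M → M → M → Prop) (s : Set M) : Prop :=
  IsCone C s ∨ IsClosedBall C s

/-- The node `a ∧ b` of the underlying tree, viewed as the closed ball
`{z | ¬ C z a b}` of `M` it determines. -/
def node (C : M → M → M → Prop) (a b : M) : Set M := {x | ¬ C x a b}

/-- `Δ(x,y,z)`. -/
def Delta (C : M → M → M → Prop) (x y z : M) : Prop := ¬ C x y z ∧ ¬ C y x z

/-- The (unary) sets which are definable by a quantifier-free formula with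
parameters using only `C` and equality.  A term is either the variable
(`Option.none`) or a parameter (`Option.some a`). -/
inductive QFDef (C : M → M → M → Prop) : Set M → Prop
  | atomC (t₁ t₂ t₃ : Option M) :
      QFDef C {x | C (t₁.getD x) (t₂.getD x) (t₃.getD x)}
  | atomEq (t₁ t₂ : Option M) : QFDef C {x | t₁.getD x = t₂.getD x}
  | compl {s : Set M} : QFDef C s → QFDef C sᶜ
  | union {s t : Set M} : QFDef C s → QFDef C t → QFDef C (s ∪ t)

/-- The ternary relation interpreting the symbol `r`. -/
def interpC (L : FirstOrder.Language.{u, u}) (M : Type u) [L.Structure M]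
    (r : L.Relations 3) : M → M → M → Prop :=
  fun a b c => Language.Structure.RelMap r ![a, b, c]

/-- `M` is C-minimal: in every elementarily equivalent structure, every
definable (with parameters) subset is quantifier-free definable using only
`C` and `=`. -/
def CMinimal (L : FirstOrder.Language.{u, u}) (M : Type u) [L.Structure M]
    (r : L.Relations 3) : Prop :=
  ∀ (N : Type u) (SN : L.Structure N),
    letI := SN
    L.ElementarilyEquivalent M N →
      ∀ s : Set N, Set.Definable₁ (univ : Set N) L s → QFDef (interpC L N r) s

/-- The (model-theoretic) algebraic closure of a set of parameters. -/
def acl (L : FirstOrder.Language.{u, u}) (M : Type u) [L.Structure M] (A : Set M) : Set M :=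
  {a | ∃ s : Set M, Set.Definable₁ A L s ∧ s.Finite ∧ a ∈ s}

/-- The Steinitz exchange property for the algebraic closure. -/
def HasExchange (L : FirstOrder.Language.{u, u}) (M : Type u) [L.Structure M] : Prop :=
  ∀ (A : Set M) (a b : M),
    a ∈ acl L M (A ∪ {b}) → a ∉ acl L M A → b ∈ acl L M (A ∪ {a})

/-- `M` is geometric: acl has the exchange property in every elementarily
equivalent structure. -/
def Geometric (L : FirstOrder.Language.{u, u}) (M : Type u) [L.Structure M] : Prop :=
  ∀ (N : Type u) (SN : L.Structure N),
    letI := SN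
    L.ElementarilyEquivalent M N → HasExchange L N

/-- `M` is trivial: in every elementarily equivalent structure the pregeometry
given by acl is trivial. -/
def TrivialGeometry (L : FirstOrder.Language.{u, u}) (M : Type u) [L.Structure M] : Prop :=
  ∀ (N : Type u) (SN : L.Structure N),
    letI := SN
    L.ElementarilyEquivalent M N →
      ∀ A : Set N, acl L N A = ⋃ a ∈ A, acl L N {a}

/-- `M` is definably maximal: every definable family of cones which is linearly
ordered by inclusion has a non-empty intersection. -/
def DefinablyMaximal (L : FirstOrder.Language.{u, u}) (M : Type u) [L.Structure M]
    (r : L.Relations 3) : Prop :=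
  ∀ (n : ℕ) (S : Set (Fin (n + 1) → M)) (P : Set (Fin n → M)),
    Set.Definable (univ : Set M) L S →
    (∀ p ∈ P, IsCone (interpC L M r) {x | Fin.snoc p x ∈ S}) →
    (∀ p ∈ P, ∀ q ∈ P,
      {x | Fin.snoc p x ∈ S} ⊆ {x | Fin.snoc q x ∈ S} ∨
        {x | Fin.snoc q x ∈ S} ⊆ {x | Fin.snoc p x ∈ S}) →
    P.Nonempty → (⋂ p ∈ P, {x | Fin.snoc p x ∈ S}).Nonempty

/-- Leaves of the underlying tree are the singletons. -/
def IsLeafSet (s : Set M) : Prop := ∃ x : M, s = {x}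

/-- The interval `(lo, hi)` of the branch `br c`, consisting of all nodes
(coded as the closed balls they determine) strictly between the endpoints.
`lo = none` denotes `-∞`; `lo = some p` denotes the node `c ∧ p`; `hi : M`
denotes the node `c ∧ hi` (the leaf `c` when `hi = c`).  The tree ordering is
reverse inclusion of balls. -/
def branchInterval (C : M → M → M → Prop) (c : M) (lo : Option M) (hi : M) :
    Set (Set M) :=
  {B | (∃ s, B = node C c s) ∧ ¬ IsLeafSet B ∧
    (∀ p ∈ lo, B ⊂ node C c p) ∧ node C c hi ⊂ B}

/-- `I` is an interval of the branch `br c`. -/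
def IsIntervalOn (C : M → M → M → Prop) (c : M) (I : Set (Set M)) : Prop :=
  ∃ (lo : Option M) (hi : M), I = branchInterval C c lo hi

/-- `I` is a bounded interval of `br c` (bounded from below and from above). -/
def IsBoundedInterval (C : M → M → M → Prop) (c : M) (I : Set (Set M)) : Prop :=
  ∃ p hi : M, I = branchInterval C c (some p) hi ∧ ¬ IsLeafSet (node C c hi)

/-- `I` is an unbounded (i.e. not bounded) interval of `br c`. -/
def IsUnboundedInterval (C : M → M → M → Prop) (c : M) (I : Set (Set M)) :
    Prop :=
  IsIntervalOn C c I ∧ ¬ IsBoundedInterval C c I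

/-- The relation on nodes coded by `S ⊆ M²` via `(s,t) ↦ (c ∧ s, d ∧ t)`. -/
def codedRel (C : M → M → M → Prop) (S : Set (Fin 2 → M)) (c d : M)
    (B B' : Set M) : Prop :=
  ∃ s t : M, ![s, t] ∈ S ∧ B = node C c s ∧ B' = node C d t

/-- `S ⊆ M²` codes a bijection between the set `I` of nodes of `br c` and the
set `J` of nodes of `br d`. -/
def CodesBijectionBetween (C : M → M → M → Prop) (S : Set (Fin 2 → M))
    (c d : M) (I J : Set (Set M)) : Prop :=
  (∀ B B', codedRel C S c d B B' → B ∈ I ∧ B' ∈ J) ∧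
  (∀ B ∈ I, ∃! B', B' ∈ J ∧ codedRel C S c d B B') ∧
  (∀ B' ∈ J, ∃! B, B ∈ I ∧ codedRel C S c d B B')

/-- Condition (NB): there is no definable bijection between a bounded interval
and an unbounded interval of branches of the underlying tree. -/
def NB (L : FirstOrder.Language.{u, u}) (M : Type u) [L.Structure M] (r : L.Relations 3) :
    Prop :=
  ∀ (c d : M) (S : Set (Fin 2 → M)), Set.Definable (univ : Set M) L S →
    ∀ I J : Set (Set M),
      IsBoundedInterval (interpC L M r) c I →
      IsUnboundedInterval (interpC L M r) d J →
      ¬ CodesBijectionBetween (interpC L M r) S c d I J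

/-- An infinite group definable in `M`: an infinite definable `G ⊆ Mⁿ`
together with a definable subset of `M^{3n}` which is the graph of a group
operation on `G`. -/
def DefinableInfiniteGroup (L : FirstOrder.Language.{u, u}) (M : Type u)
    [L.Structure M] : Prop :=
  ∃ (n : ℕ) (G : Set (Fin n → M)) (mul : (Fin n → M) → (Fin n → M) → Fin n → M)
    (one : Fin n → M) (inv : (Fin n → M) → Fin n → M),
    Set.Definable (univ : Set M) L G ∧ G.Infinite ∧
    Set.Definable (univ : Set M) L
      {t : (Fin n ⊕ (Fin n ⊕ Fin n)) → M |
        t ∘ Sum.inl ∈ G ∧ t ∘ Sum.inr ∘ Sum.inl ∈ G ∧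
          mul (t ∘ Sum.inl) (t ∘ Sum.inr ∘ Sum.inl) = t ∘ Sum.inr ∘ Sum.inr} ∧
    one ∈ G ∧ (∀ a ∈ G, ∀ b ∈ G, mul a b ∈ G) ∧
    (∀ a ∈ G, ∀ b ∈ G, ∀ c ∈ G, mul (mul a b) c = mul a (mul b c)) ∧
    (∀ a ∈ G, mul one a = a ∧ mul a one = a) ∧
    (∀ a ∈ G, inv a ∈ G ∧ mul a (inv a) = one ∧ mul (inv a) a = one)

/-- `g` is a C-isomorphism from `A` onto `B`. -/
def CIsoOn (C : M → M → M → Prop) (A B : Set M) (g : M → M) : Prop :=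
  Set.BijOn g A B ∧ ∀ x ∈ A, ∀ y ∈ A, ∀ z ∈ A, (C x y z ↔ C (g x) (g y) (g z))

/-- The relation `C_e(f,g,h)`. -/
def CeRel (C : M → M → M → Prop) (V : Set M) (e : M) (f g h : M → M) : Prop :=
  ∃ W : Set M, IsCone C W ∧ e ∈ W ∧ W ⊆ V ∧ ∀ x ∈ W \ {e}, C (f x) (g x) (h x)

/-- The relation `(¬C)_e(f,g,h)`. -/
def NCeRel (C : M → M → M → Prop) (V : Set M) (e : M) (f g h : M → M) : Prop :=
  ∃ W : Set M, IsCone C W ∧ e ∈ W ∧ W ⊆ V ∧ ∀ x ∈ W \ {e}, ¬ C (f x) (g x) (h x)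

/-- A function is definable on `V` if its graph over `V` is definable. -/
def DefinableFunOn (L : FirstOrder.Language.{u, u}) (M : Type u) [L.Structure M]
    (V : Set M) (g : M → M) : Prop :=
  Set.Definable (univ : Set M) L {t : Fin 2 → M | t 0 ∈ V ∧ g (t 0) = t 1}

/-- A nice family of functions `{f u : u ∈ U}` on the cone `V`, with absorbing
element `e`. -/
structure NiceFamily (L : FirstOrder.Language.{u, u}) (M : Type u) [L.Structure M]
    (C : M → M → M → Prop) where
  U : Set M
  V : Set M
  e : M
  f : M → M → M
  coneU : IsCone C U
  coneV : IsCone C V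
  he : e ∈ V
  definable : Set.Definable (univ : Set M) L
    {t : Fin 3 → M | t 0 ∈ U ∧ t 1 ∈ V ∧ f (t 0) (t 1) = t 2}
  auto : ∀ u ∈ U, CIsoOn C V V (f u)
  fixe : ∀ u ∈ U, f u e = e
  star : ∀ x ∈ V \ {e}, ∃ V' : Set M, V' ⊆ V ∧ IsCone C V' ∧
    CIsoOn C U V' fun u => f u x

namespace NiceFamily

variable {L : FirstOrder.Language.{u, u}} [L.Structure M] {C : M → M → M → Prop}

/-- `f u` is tangent to `g` relatively to the family. -/
def Tangent (F : NiceFamily L M C) (u : M) (g : M → M) : Prop :=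
  u ∈ F.U ∧ ∀ u' ∈ F.U, NCeRel C F.V F.e (F.f u) (F.f u') g

/-- The set `T_g` of indices of tangents to `g`. -/
def Tset (F : NiceFamily L M C) (g : M → M) : Set M := {u | F.Tangent u g}

/-- The set `Γ_{g,u}`. -/
def Gamma (F : NiceFamily L M C) (g : M → M) (u : M) : Set M :=
  {y | y ∈ F.U ∧ CeRel C F.V F.e (F.f u) (F.f y) g}

/-- `g` is derivable relatively to the family: it has exactly one tangent. -/
def Derivable (F : NiceFamily L M C) (g : M → M) : Prop := ∃! u, F.Tangent u g

/-- `f u` is non-dilating. -/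
def NonDilating (F : NiceFamily L M C) (u : M) : Prop :=
  NCeRel C F.V F.e (fun x => F.f u (F.f u x)) (F.f u) id

/-- `u₀` is an identity element for the family. -/
def HasIdentity (F : NiceFamily L M C) (u₀ : M) : Prop :=
  u₀ ∈ F.U ∧ ∀ x ∈ F.V, F.f u₀ x = x

end NiceFamily

/-- Continuity on `A` with respect to the topology generated by the cones. -/
def ContinuousOnCones (C : M → M → M → Prop) (A : Set M) (g : M → M) : Prop :=
  ∀ x ∈ A, ∀ W : Set M, IsCone C W → g x ∈ W →
    ∃ W' : Set M, IsCone C W' ∧ x ∈ W' ∧ ∀ y ∈ W' ∩ A, g y ∈ W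

/-!
A quantifier-free definable set is eventually constant along any filter which lies in a cut of the
tree; the punctured neighbourhoods of `e` are such a filter, so for `u, v ∈ U` the relation
`C(f_u, f_v, g)` holds either for all or for no `x ≠ e` close to `e`. Since `u ↦ f_u(x)` preserves
`C`, pointwise computations in the tree then show that `T_g` contains `Λ_{u∧v}` for `u, v ∈ T_g`,
and that for a fixed tangent `f_u` one has `v ∈ T_g` iff eventually `¬C(f_v, f_u, g)`. Hence `T_g`
is definable and convex, and by C-minimality such a set is a ball.

The delicate point is the cone in (1) which works for all `z ∈ Λ_{u∧v}` at once. If there were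
none, one could pick `z_i ∈ Λ_{u∧v}` and `t_i → e` such that the `z_i` lie in distinct cones at one
node and `i ≥ n` is definable from `(z_i, t_n)`. In an ultrapower this gives a definable set which
splits an equidistant set into two infinite parts, contradicting C-minimality there.
-/

namespace IsCRelation

variable {C : M → M → M → Prop} {e u v w x y z : M} {W : Set M}

theorem symm (hC : IsCRelation C) (h : C x y z) : C x z y := hC.1 _ _ _ h

theorem asymm (hC : IsCRelation C) (h : C x y z) : ¬ C y x z := hC.2.1 _ _ _ h

theorem rel_or_rel (hC : IsCRelation C) (h : C x y z) (w : M) : C x w z ∨ C w y z :=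
  hC.2.2.1 _ _ _ w h

theorem irrefl (hC : IsCRelation C) : ¬ C x x y := fun h => hC.asymm h h

theorem ne (hC : IsCRelation C) (h : C x y z) : x ≠ y := by
  rintro rfl
  exact hC.irrefl h

theorem exists_ne_rel (hC : IsCRelation C) (h : x ≠ y) : ∃ z, z ≠ y ∧ C x z y :=
  let ⟨z, hz, hxyz⟩ := hC.2.2.2 _ _ h
  ⟨z, hz, hC.symm hxyz⟩

theorem rel_self (hC : IsCRelation C) (h : x ≠ y) : C x y y := by
  obtain ⟨z, -, hz⟩ := hC.exists_ne_rel h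
  exact (hC.rel_or_rel hz y).resolve_right fun hyz => hC.irrefl (hC.symm hyz)

theorem trans (hC : IsCRelation C) (hxyz : C x y z) (hxzw : C x z w) : C x y w := by
  rcases hC.rel_or_rel (hC.symm hxyz) w with hxwy | hwzy
  · exact hC.symm hxwy
  · exact (hC.rel_or_rel hxzw y).resolve_right fun hyzw => hC.asymm (hC.symm hwzy) (hC.symm hyzw)

theorem subset_cone_or_subset_cone (hC : IsCRelation C) (s t e : M) :
    {x | C s x e} ⊆ {x | C t x e} ∨ {x | C t x e} ⊆ {x | C s x e} := by
  by_cases hts : C t s e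
  · exact .inl fun x hx => (hC.rel_or_rel hts x).resolve_right fun hxse => hC.asymm hxse hx
  · exact .inr fun x hx => (hC.rel_or_rel hx s).resolve_left hts

theorem setOf_rel_subset_or_subset (hC : IsCRelation C) (u v w : M) :
    {x | C x u v} ⊆ {x | C x u w} ∨ {x | C x u w} ⊆ {x | C x u v} := by
  by_cases hw : C w u v
  · exact .inr fun x hx => (hC.rel_or_rel hw x).resolve_left fun hwxv =>
      hC.asymm (hC.symm hx) (hC.trans hwxv (hC.symm hw))
  · exact .inl fun x hx =>
      hC.trans hx (hC.symm ((hC.rel_or_rel hx w).resolve_right hw))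

theorem exists_eq_cone (hC : IsCRelation C) (hW : IsCone C W) (he : e ∈ W) :
    ∃ t ≠ e, W = {x | C t x e} := by
  obtain ⟨a, b, -, rfl⟩ := hW
  exact ⟨a, hC.ne he, Set.ext fun x =>
    ⟨fun hx => hC.trans hx (hC.symm he), fun hx => hC.trans hx he⟩⟩

theorem node_subset_cone (hC : IsCRelation C) (hW : IsCone C W) (hu : u ∈ W) (hv : v ∈ W) :
    node C u v ⊆ W := by
  obtain ⟨a, b, -, rfl⟩ := hW
  exact fun z hz =>
    hC.trans ((hC.rel_or_rel (hC.trans hu (hC.symm hv)) z).resolve_right hz) hv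

theorem cone_ne_univ (hC : IsCRelation C) (hW : IsCone C W) : W ≠ univ := by
  obtain ⟨a, b, -, rfl⟩ := hW
  exact fun h => hC.irrefl (eq_univ_iff_forall.1 h a)

theorem not_rel_of_mem_node (hC : IsCRelation C) (hw : w ∈ node C u v) (hvuz : ¬ C v u z) :
    ¬ C w u z := fun h =>
  have hwvz : C w v z := (hC.rel_or_rel h v).resolve_right hvuz
  hw (hC.trans h (hC.symm hwvz))

theorem mem_node_of_rel_of_not_rel (hC : IsCRelation C) (hw : ¬ C w u z) (hx : C u x z)
    (hy : ¬ C u y z) : w ∈ node C x y := by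
  intro h
  have hwux : C w u x := (hC.rel_or_rel (hC.symm h) u).resolve_right fun huyx =>
    hy (hC.trans huyx hx)
  rcases hC.rel_or_rel hwux z with hwzx | hzux
  · exact hw (hC.trans hwux (hC.symm hwzx))
  · exact hC.asymm hzux (hC.symm hx)

theorem rel_of_rel_of_rel (hC : IsCRelation C) (huwv : C u w v) (hvuz : C v u z) : C w u z :=
  (hC.rel_or_rel hvuz w).resolve_left fun hvwz =>
    hC.asymm (hC.symm huwv) (hC.trans hvuz (hC.symm hvwz))

end IsCRelation

/-- The topology generated by the cones. -/
abbrev coneTopology (C : M → M → M → Prop) : TopologicalSpace M :=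
  TopologicalSpace.generateFrom {W | IsCone C W}

/-- The punctured neighbourhoods of `e` in the cone topology: `∀ᶠ x in puncturedNhds C e, p x`
is what the subscript `e` means in `C_e(f, g, h)` and `(¬C)_e(f, g, h)`. -/
def puncturedNhds (C : M → M → M → Prop) (e : M) : Filter M :=
  @nhdsWithin M (coneTopology C) e {e}ᶜ

section PuncturedNhds

variable {C : M → M → M → Prop} {e t : M} {p : M → Prop} {V : Set M}

theorem hasBasis_puncturedNhds [Nontrivial M] (hC : IsCRelation C) (e : M) :
    (puncturedNhds C e).HasBasis (· ≠ e) fun t => {x | C t x e} \ {e} := by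
  have hnhds : @nhds M (coneTopology C) e = ⨅ t ∈ {t | t ≠ e}, Filter.principal {x | C t x e} := by
    rw [coneTopology, TopologicalSpace.nhds_generateFrom]
    refine le_antisymm (le_iInf₂ fun t ht => ?_) (le_iInf₂ fun W hW => ?_)
    · exact iInf₂_le {x | C t x e} ⟨hC.rel_self ht, t, e, ht, rfl⟩
    · obtain ⟨t, ht, rfl⟩ := hC.exists_eq_cone hW.2 hW.1
      exact iInf₂_le t ht
  have hbasis := Filter.hasBasis_biInf_principal (s := fun t => {x | C t x e}) (S := {t | t ≠ e})
    (fun s hs t ht => (hC.subset_cone_or_subset_cone s t e).elim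
      (fun h => ⟨s, hs, subset_rfl, h⟩) fun h => ⟨t, ht, h, subset_rfl⟩) (exists_ne e)
  rw [← hnhds] at hbasis
  exact hbasis.inf_principal _

theorem eventually_puncturedNhds [Nontrivial M] (hC : IsCRelation C) :
    (∀ᶠ x in puncturedNhds C e, p x) ↔ ∃ t ≠ e, ∀ x, C t x e → x ≠ e → p x := by
  rw [(hasBasis_puncturedNhds hC e).eventually_iff]
  simp only [mem_sdiff, mem_ofPred_eq, mem_singleton_iff, and_imp]

theorem eventually_puncturedNhds_iff_exists_cone (hC : IsCRelation C) (hV : IsCone C V)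
    (he : e ∈ V) :
    (∀ᶠ x in puncturedNhds C e, p x) ↔
      ∃ W, IsCone C W ∧ e ∈ W ∧ W ⊆ V ∧ ∀ x ∈ W \ {e}, p x := by
  obtain ⟨s, hs, rfl⟩ := hC.exists_eq_cone hV he
  have : Nontrivial M := ⟨s, e, hs⟩
  rw [eventually_puncturedNhds hC]
  constructor
  · rintro ⟨t, ht, h⟩
    rcases hC.subset_cone_or_subset_cone s t e with hst | hts
    · exact ⟨_, hV, he, subset_rfl, fun x hx => h x (hst hx.1) hx.2⟩
    · exact ⟨_, ⟨t, e, ht, rfl⟩, hC.rel_self ht, hts, fun x hx => h x hx.1 hx.2⟩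
  · rintro ⟨W, hW, heW, -, h⟩
    obtain ⟨t, ht, rfl⟩ := hC.exists_eq_cone hW heW
    exact ⟨t, ht, fun x hx hxe => h x ⟨hx, hxe⟩⟩

theorem eventually_rel (hC : IsCRelation C) (ht : t ≠ e) :
    ∀ᶠ x in puncturedNhds C e, C t x e :=
  have : Nontrivial M := ⟨t, e, ht⟩
  (eventually_puncturedNhds hC).2 ⟨t, ht, fun _ hx _ => hx⟩

theorem eventually_ne (C : M → M → M → Prop) (e : M) : ∀ᶠ x in puncturedNhds C e, x ≠ e :=
  @self_mem_nhdsWithin M (coneTopology C) e {e}ᶜ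

theorem eventually_mem_cone (hC : IsCRelation C) (hV : IsCone C V) (he : e ∈ V) :
    ∀ᶠ x in puncturedNhds C e, x ∈ V :=
  (eventually_puncturedNhds_iff_exists_cone hC hV he).2 ⟨V, hV, he, subset_rfl, fun _ hx => hx.1⟩

theorem puncturedNhds_neBot [Nontrivial M] (hC : IsCRelation C) (e : M) :
    (puncturedNhds C e).NeBot :=
  (hasBasis_puncturedNhds hC e).neBot_iff.2 fun ht =>
    let ⟨x, hxe, hx⟩ := hC.exists_ne_rel ht
    ⟨x, hx, hxe⟩

theorem eventually_forall_node [Nontrivial M] (hC : IsCRelation C)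
    (h : ∀ᶠ x in puncturedNhds C e, p x) :
    ∀ᶠ x in puncturedNhds C e, ∀ y ∈ node C x e, y ≠ e → p y := by
  obtain ⟨t, ht, h⟩ := (eventually_puncturedNhds hC).1 h
  filter_upwards [eventually_rel hC ht] with x hx y hy hye
  exact h y ((hC.rel_or_rel hx y).resolve_right hy) hye

end PuncturedNhds

namespace QFDef

variable {C : M → M → M → Prop} {D : Set M} {l : Filter M}

theorem eventuallyConst (hC : IsCRelation C) (hD : QFDef C D)
    (hout : ∀ p q, Filter.EventuallyConst (fun x => C x p q) l)
    (hin : ∀ p q, Filter.EventuallyConst (fun x => C p x q) l)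
    (heq : ∀ p, Filter.EventuallyConst (fun x => x = p) l) :
    Filter.EventuallyConst (fun x => x ∈ D) l := by
  have const_false {p : M → Prop} (hp : ∀ x, ¬ p x) : Filter.EventuallyConst p l :=
    Filter.eventuallyConst_pred.2 <| .inr <| .of_forall hp
  induction hD with
  | atomC t₁ t₂ t₃ =>
    rcases t₁ with _ | p <;> rcases t₂ with _ | q <;> rcases t₃ with _ | q'
    · exact const_false fun x => hC.irrefl
    · exact const_false fun x => hC.irrefl
    · exact const_false fun x h => hC.irrefl (hC.symm h)
    · exact hout q q'
    · exact ((heq p).comp Not).congr <| .of_forall fun x =>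
        propext ⟨fun h => hC.rel_self (Ne.symm h), fun h => (hC.ne h).symm⟩
    · exact hin p q'
    · exact (hin p q).congr <| .of_forall fun x => propext ⟨hC.symm, hC.symm⟩
    · exact .const (C p q q')
  | atomEq t₁ t₂ =>
    rcases t₁ with _ | p <;> rcases t₂ with _ | q
    · exact (Filter.EventuallyConst.const True).congr <| .of_forall fun x => (eq_true rfl).symm
    · exact heq q
    · exact (heq p).congr <| .of_forall fun x => propext eq_comm
    · exact .const (p = q)
  | compl _ ih => exact ih.comp Not
  | union _ _ ih₁ ih₂ => exact ih₁.comp₂ Or ih₂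

/- By `hl`, near `l` the node `x ∧ u` is strictly comparable to every node `u ∧ p`. -/
theorem eventuallyConst_of_cut (hC : IsCRelation C) (hD : QFDef C D) (u : M)
    (hl : ∀ p, (∀ᶠ x in l, C x u p) ∨ (∀ᶠ x in l, C p x u)) :
    Filter.EventuallyConst (fun x => x ∈ D) l := by
  refine hD.eventuallyConst hC (fun p q => ?_) (fun p q => ?_) fun p => ?_
  · rcases hl q with hq | hq
    · rcases hl p with hp | hp
      · refine Filter.eventuallyConst_pred.2 (.inl ?_)
        filter_upwards [hp, hq] with x hp hq using hC.trans (hC.symm hp) hq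
      · refine Filter.eventuallyConst_pred.2 (.inr ?_)
        filter_upwards [hp, hq] with x hp hq h
        exact hC.asymm hp (hC.symm (hC.trans hq (hC.symm h)))
    · refine (Filter.EventuallyConst.const (C u p q)).congr ?_
      filter_upwards [hq] with x hq
      refine propext ⟨fun h => ?_, fun h => ?_⟩
      · exact (hC.rel_or_rel h x).resolve_left fun h' => hC.asymm (hC.symm hq) (hC.symm h')
      · exact (hC.rel_or_rel h u).resolve_left fun h' => hC.asymm hq (hC.symm h')
  · rcases hl p with hp | hp
    · refine Filter.eventuallyConst_pred.2 (.inr ?_)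
      rcases hl q with hq | hq
      · filter_upwards [hp, hq] with x hp hq h
        exact hC.asymm h (hC.trans (hC.symm hp) hq)
      · filter_upwards [hp, hq] with x hp hq h
        rcases hC.rel_or_rel hq p with hqpu | hpxu
        · exact hC.asymm (hC.symm h) (hC.symm (hC.trans hq (hC.symm hqpu)))
        · exact hC.asymm hpxu (hC.symm hp)
    · refine (Filter.EventuallyConst.const (C p u q)).congr ?_
      filter_upwards [hp] with x hp
      exact propext ⟨hC.trans hp, hC.trans (hC.symm hp)⟩
  · refine Filter.eventuallyConst_pred.2 (.inr ?_)
    rcases hl p with hp | hp <;> filter_upwards [hp] with x hp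
    · rintro rfl
      exact hC.irrefl (hC.symm hp)
    · exact (hC.ne hp).symm

theorem eventuallyConst_puncturedNhds (hC : IsCRelation C) (hD : QFDef C D) (e : M) :
    Filter.EventuallyConst (fun x => x ∈ D) (puncturedNhds C e) := by
  refine hD.eventuallyConst_of_cut hC e fun p => ?_
  by_cases hp : p = e
  · subst hp
    exact .inl ((eventually_ne C p).mono fun x hx => hC.rel_self hx)
  · exact .inr (eventually_rel hC hp)

end QFDef

section Balls

variable {C : M → M → M → Prop} {T : Set M} {u : M}

theorem exists_filter_of_chain {ι : Type*} {I : Set ι} {s : ι → Set M}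
    (hI : I.Nonempty) (hs : ∀ i ∈ I, (s i).Nonempty)
    (hchain : ∀ i ∈ I, ∀ j ∈ I, s i ⊆ s j ∨ s j ⊆ s i) :
    ∃ l : Filter M, l.NeBot ∧ ∀ i ∈ I, s i ∈ l := by
  refine ⟨⨅ i ∈ I, Filter.principal (s i), ?_, fun i hi => ?_⟩
  · refine (Filter.hasBasis_biInf_principal (fun i hi j hj => ?_) hI).neBot_iff.2 fun hi => hs _ hi
    rcases hchain i hi j hj with h | h
    · exact ⟨i, hi, subset_rfl, h⟩
    · exact ⟨j, hj, h, subset_rfl⟩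
  · exact Filter.mem_iInf_of_mem i (Filter.mem_iInf_of_mem hi (Filter.mem_principal_self _))

theorem exists_filter_inside (hC : IsCRelation C) (hu : u ∈ T)
    (hconv : ∀ v ∈ T, node C u v ⊆ T) (hball : ¬ IsClosedBall C T) :
    ∃ l : Filter M, l.NeBot ∧ (∀ᶠ x in l, x ∈ T) ∧ ∀ v ∈ T, ∀ᶠ x in l, C x u v := by
  obtain ⟨l, hl, hlT⟩ := exists_filter_of_chain (s := fun v => T ∩ {x | C x u v}) ⟨u, hu⟩
    (fun v hv => by
      obtain ⟨x, hxT, hx⟩ := not_subset.1 fun h => hball ⟨u, v, h.antisymm (hconv v hv)⟩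
      exact ⟨x, hxT, not_not.1 hx⟩)
    (fun v _ v' _ => (hC.setOf_rel_subset_or_subset u v v').imp (inter_subset_inter_right T)
      (inter_subset_inter_right T))
  exact ⟨l, hl, Filter.mem_of_superset (hlT u hu) inter_subset_left,
    fun v hv => Filter.mem_of_superset (hlT v hv) inter_subset_right⟩

theorem exists_filter_outside (hC : IsCRelation C) (hu : u ∈ T)
    (hconv : ∀ v ∈ T, node C u v ⊆ T) (hball : ¬ IsCone C T) (hT : Tᶜ.Nonempty) :
    ∃ l : Filter M, l.NeBot ∧ (∀ᶠ x in l, x ∉ T) ∧ ∀ w ∉ T, ∀ᶠ x in l, C w x u := by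
  obtain ⟨l, hl, hlT⟩ := exists_filter_of_chain (s := fun w => Tᶜ ∩ {x | C w x u}) hT
    (fun w hw => by
      have hTw : T ⊆ {x | C w x u} := fun v hv => hC.symm (not_not.1 fun h => hw (hconv v hv h))
      obtain ⟨x, hx, hxT⟩ := not_subset.1 fun h =>
        hball ⟨w, u, fun hwu => hw (hwu ▸ hu), hTw.antisymm h⟩
      exact ⟨x, hxT, hx⟩)
    (fun w _ w' _ => (hC.subset_cone_or_subset_cone w w' u).imp (inter_subset_inter_right Tᶜ)
      (inter_subset_inter_right Tᶜ))
  obtain ⟨w, hw⟩ := hT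
  exact ⟨l, hl, Filter.mem_of_superset (hlT w hw) inter_subset_left,
    fun w hw => Filter.mem_of_superset (hlT w hw) inter_subset_right⟩

theorem QFDef.isBall (hC : IsCRelation C) (hT : QFDef C T) (hu : u ∈ T)
    (hconv : ∀ v ∈ T, node C u v ⊆ T) (hcompl : Tᶜ.Nonempty) : IsBall C T := by
  by_contra hball
  obtain ⟨hcone, hclosed⟩ := not_or.1 hball
  obtain ⟨l, _, hlT, hlu⟩ := exists_filter_inside hC hu hconv hclosed
  obtain ⟨l', _, hlT', hlu'⟩ := exists_filter_outside hC hu hconv hcone hcompl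
  have hrel : ∀ x ∉ T, ∀ v ∈ T, C x u v := fun x hx v hv => not_not.1 fun h => hx (hconv v hv h)
  have hcut (p : M) : (∀ᶠ x in l ⊔ l', C x u p) ∨ (∀ᶠ x in l ⊔ l', C p x u) := by
    by_cases hp : p ∈ T
    · exact .inl (Filter.eventually_sup.2 ⟨hlu p hp, hlT'.mono fun x hx => hrel x hx p hp⟩)
    · exact .inr (Filter.eventually_sup.2
        ⟨hlT.mono fun x hx => hC.symm (hrel p hp x hx), hlu' p hp⟩)
  rcases Filter.eventuallyConst_pred.1 (hT.eventuallyConst_of_cut hC u hcut) with h | h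
  · obtain ⟨x, hxT', hxT⟩ := (hlT'.and (h.filter_mono le_sup_right)).exists
    exact hxT' hxT
  · obtain ⟨x, hxT, hxT'⟩ := (hlT.and (h.filter_mono le_sup_left)).exists
    exact hxT' hxT

end Balls

/-- A set is equidistant if any two of its distinct elements determine the same node, so that
its elements lie in distinct cones at that node. -/
def IsEquidistant (C : M → M → M → Prop) (S : Set M) : Prop :=
  S.Pairwise fun x y => S ⊆ node C x y

theorem IsEquidistant.eq_of_rel {C : M → M → M → Prop} {S : Set M} {x x' y z : M}
    (hC : IsCRelation C) (hS : IsEquidistant C S) (hx : x ∈ S) (hx' : x' ∈ S) (hy : y ∈ S)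
    (h : C y x z) (h' : C y x' z) : x = x' :=
  by_contra fun hne => hS hx hx' hne hy (hC.trans h (hC.symm h'))

theorem QFDef.finite_inter_or_finite_sdiff {C : M → M → M → Prop} {D S : Set M}
    (hC : IsCRelation C) (hD : QFDef C D) (hS : IsEquidistant C S) :
    (S ∩ D).Finite ∨ (S \ D).Finite := by
  have eventually_iff (p : M → Prop) :
      (∀ᶠ x in Filter.cofinite ⊓ Filter.principal S, p x) ↔ {x ∈ S | ¬ p x}.Finite := by
    simp only [Filter.eventually_inf_principal, Filter.eventually_cofinite, Classical.not_imp]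
  have hconst := hD.eventuallyConst hC (l := Filter.cofinite ⊓ Filter.principal S)
    (fun p q => Filter.eventuallyConst_pred.2 ?_) (fun p q => Filter.eventuallyConst_pred.2 ?_)
    fun p => Filter.eventuallyConst_pred.2 <| .inr <| (eventually_iff _).2 <|
      (finite_singleton p).subset fun x hx => not_not.1 hx.2
  · rcases Filter.eventuallyConst_pred.1 hconst with h | h
    · exact .inr ((eventually_iff _).1 h)
    · exact .inl (((eventually_iff _).1 h).subset fun x hx => ⟨hx.1, not_not.2 hx.2⟩)
  · rcases {x ∈ S | ¬ C x p q}.subsingleton_or_nontrivial with h | ⟨x, hx, x', hx', hne⟩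
    · exact .inl ((eventually_iff _).2 h.finite)
    · refine .inr ((eventually_iff _).2 (finite_empty.subset fun y hy => ?_))
      have hy' := not_not.1 hy.2
      exact hne (hS.eq_of_rel hC hx.1 hx'.1 hy.1
        ((hC.rel_or_rel hy' x).resolve_right hx.2) ((hC.rel_or_rel hy' x').resolve_right hx'.2))
  · rcases {x ∈ S | C p x q}.subsingleton_or_nontrivial with h | ⟨x, hx, x', hx', hne⟩
    · exact .inr ((eventually_iff _).2 (by simpa only [not_not] using h.finite))
    · refine .inl ((eventually_iff _).2 (finite_empty.subset fun y hy => ?_))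
      exact hne (hS.eq_of_rel hC hx.1 hx'.1 hy.1
        ((hC.rel_or_rel hx.2 y).resolve_left hy.2) ((hC.rel_or_rel hx'.2 y).resolve_left hy.2))

/-- The ultrapower of `M` by an ultrafilter on the index type `ι`. -/
abbrev Ultrapower (M : Type u) {ι : Type} (l : Ultrafilter ι) : Type u :=
  (l : Filter ι).Product fun _ => M

namespace Ultrapower

variable {L : FirstOrder.Language.{u, u}} [L.Structure M] {r : L.Relations 3} {ι : Type}
  {l : Ultrafilter ι}

/-- The element of the ultrapower represented by a family of elements of `M`. -/
def mk (l : Ultrafilter ι) (x : ι → M) : Ultrapower M l := Quotient.mk _ x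

theorem mk_surjective : (mk l : (ι → M) → Ultrapower M l).Surjective := Quotient.mk_surjective

theorem mk_eq_mk {x y : ι → M} : mk l x = mk l y ↔ ∀ᶠ i in l, x i = y i := Quotient.eq

theorem interpC_mk [Nonempty M] (x y z : ι → M) :
    interpC L (Ultrapower M l) r (mk l x) (mk l y) (mk l z) ↔
      ∀ᶠ i in l, interpC L M r (x i) (y i) (z i) := by
  have h := Language.Ultraproduct.realize_formula_cast (L := L) (u := l) (M := fun _ => M)
    (r.formula fun i : Fin 3 => Language.Term.var i) ![x, y, z]
  simp only [Language.Formula.realize_rel, Language.Term.realize_var] at h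
  unfold interpC
  convert! h using 2
  · ext i
    fin_cases i <;> rfl
  · refine funext fun n => congrArg (Language.Structure.RelMap r) (funext fun i => ?_)
    fin_cases i <;> rfl

theorem isCRelation [Nonempty M] (hC : IsCRelation (interpC L M r)) :
    IsCRelation (interpC L (Ultrapower M l) r) := by
  refine ⟨?_, ?_, ?_, ?_⟩ <;> simp only [mk_surjective.forall, mk_surjective.exists, interpC_mk]
  · exact fun x y z h => h.mono fun i => hC.symm
  · intro x y z h h'
    obtain ⟨i, hi, hi'⟩ := (h.and h').exists
    exact hC.asymm hi hi'
  · exact fun x y z w h => Ultrafilter.eventually_or.1 <| h.mono fun i hi => hC.rel_or_rel hi (w i)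
  · intro x y hxy
    have hxy' : ∀ᶠ i in l, x i ≠ y i := Ultrafilter.eventually_not.2 (mt mk_eq_mk.2 hxy)
    have hz (i : ι) : ∃ z, x i ≠ y i → z ≠ y i ∧ interpC L M r (x i) z (y i) := by
      by_cases h : x i = y i
      · exact ⟨x i, fun h' => (h' h).elim⟩
      · exact (hC.exists_ne_rel h).imp fun z hz _ => hz
    choose z hz using hz
    refine ⟨z, fun h => ?_, hxy'.mono fun i hi => hC.symm (hz i hi).2⟩
    obtain ⟨i, hi, hi'⟩ := (hxy'.and (mk_eq_mk.1 h)).exists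
    exact (hz i hi).1 hi'

theorem elementarilyEquivalent [Nonempty M] : L.ElementarilyEquivalent M (Ultrapower M l) :=
  Language.elementarilyEquivalent_iff.2 fun φ => by
    rw [Language.Ultraproduct.sentence_realize, Filter.eventually_const]

theorem exists_definable₁ [Nonempty M] {S : Set (Fin 2 → M)} (hS : (univ : Set M).Definable L S)
    (t : ι → M) :
    ∃ D : Set (Ultrapower M l), (univ : Set (Ultrapower M l)).Definable₁ L D ∧
      ∀ x, mk l x ∈ D ↔ ∀ᶠ i in l, ![x i, t i] ∈ S := by
  obtain ⟨φ, rfl⟩ := Set.definable_iff_exists_formula_sum.1 hS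
  refine ⟨{x | φ.Realize (Sum.elim (fun p => mk l fun _ => (p : M)) ![x, mk l t])},
    Set.definable_iff_exists_formula_sum.2 ⟨φ.relabel (Sum.elim
      (fun p : (univ : Set M) => Sum.inl ⟨mk l fun _ => (p : M), mem_univ _⟩)
      ![Sum.inr 0, Sum.inl ⟨mk l t, mem_univ _⟩]), ?_⟩, fun x => ?_⟩
  · ext v
    simp only [mem_ofPred_eq, Language.Formula.realize_relabel]
    refine iff_of_eq (congrArg φ.Realize (funext ?_))
    rintro (p | i)
    · rfl
    · fin_cases i <;> rfl
  · have h := Language.Ultraproduct.realize_formula_cast (L := L) (u := l) (M := fun _ => M) φ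
      (Sum.elim (fun p _ => (p : M)) ![x, t])
    refine (iff_of_eq (congrArg φ.Realize (funext ?_))).trans
      (h.trans (iff_of_eq (congrArg (Filter.Eventually · _) (funext fun n =>
        congrArg φ.Realize (funext ?_)))))
    all_goals
      rintro (p | i)
      · rfl
      · fin_cases i <;> rfl

theorem isEquidistant [Nonempty M] {S : Set M} (hS : IsEquidistant (interpC L M r) S) :
    IsEquidistant (interpC L (Ultrapower M l) r) (mk l '' {x | ∀ i, x i ∈ S}) := by
  rintro _ ⟨x, hx, rfl⟩ _ ⟨y, hy, rfl⟩ hxy _ ⟨z, hz, rfl⟩ h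
  have hxy' : ∀ᶠ i in l, x i ≠ y i := Ultrafilter.eventually_not.2 (mt mk_eq_mk.2 hxy)
  obtain ⟨i, hi, hi'⟩ := (hxy'.and ((interpC_mk _ _ _).1 h)).exists
  exact hS (hx i) (hy i) hi (hz i) hi'

end Ultrapower

section Definability

variable {L : FirstOrder.Language.{u, u}} [L.Structure M] {r : L.Relations 3} {α : Type*}

theorem definable_interpC {f₁ f₂ f₃ : (α → M) → M}
    (h₁ : (univ : Set M).DefinableFun L f₁) (h₂ : (univ : Set M).DefinableFun L f₂)
    (h₃ : (univ : Set M).DefinableFun L f₃) :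
    (univ : Set M).Definable L {v | interpC L M r (f₁ v) (f₂ v) (f₃ v)} := by
  have hrel : (univ : Set M).Definable L {v : Fin 3 → M | Language.Structure.RelMap r v} :=
    (Set.empty_definable_iff.2 ⟨r.formula Language.Term.var, rfl⟩).mono (empty_subset _)
  refine Set.Definable.preimage_map (F := fun v => ![f₁ v, f₂ v, f₃ v]) (fun i => ?_) hrel
  fin_cases i <;> assumption

theorem definable_exists {P : (α → M) → M → Prop}
    (h : (univ : Set M).Definable L {w : α ⊕ Fin 1 → M | P (w ∘ Sum.inl) (w (Sum.inr 0))}) :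
    (univ : Set M).Definable L {v | ∃ x, P v x} := by
  convert! h.exists_of_finite using 4 with v
  exact (Equiv.funUnique (Fin 1) M).symm.exists_congr_left

theorem definable_forall {P : (α → M) → M → Prop}
    (h : (univ : Set M).Definable L {w : α ⊕ Fin 1 → M | P (w ∘ Sum.inl) (w (Sum.inr 0))}) :
    (univ : Set M).Definable L {v | ∀ x, P v x} := by
  convert! h.forall_of_finite using 4 with v
  exact (Equiv.funUnique (Fin 1) M).symm.forall_congr_left

theorem definable₁_of_isCone {W : Set M} (hW : IsCone (interpC L M r) W) :
    (univ : Set M).Definable₁ L W := by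
  obtain ⟨a, b, -, rfl⟩ := hW
  exact definable_interpC (L.definableFun_const _ (mem_univ a)) (.proj L)
    (L.definableFun_const _ (mem_univ b))

theorem definable₁_eventually [Nontrivial M] (hC : IsCRelation (interpC L M r))
    {R : M → M → Prop} (hR : (univ : Set M).Definable L {w : Fin 2 → M | R (w 0) (w 1)}) (e : M) :
    (univ : Set M).Definable₁ L {v | ∀ᶠ x in puncturedNhds (interpC L M r) e, R v x} := by
  have hconst {α : Type} : (univ : Set M).DefinableFun L fun _ : α → M => e :=
    L.definableFun_const α (mem_univ e)
  simp only [eventually_puncturedNhds hC]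
  refine definable_exists (.inter ?_ (definable_forall (.himp ?_ (.himp ?_ ?_))))
  · exact ((Set.DefinableFun.proj L).ofPred_eq hconst).compl
  · exact definable_interpC (.proj L) (.proj L) hconst
  · exact ((Set.DefinableFun.proj L).ofPred_eq hconst).compl
  · exact hR.preimage_comp ![Sum.inl (Sum.inl 0), Sum.inr 0]

end Definability

section CMinimal

variable {L : FirstOrder.Language.{u, u}} [L.Structure M] {r : L.Relations 3}

theorem CMinimal.qfDef (hmin : CMinimal L M r) {s : Set M}
    (hs : (univ : Set M).Definable₁ L s) : QFDef (interpC L M r) s :=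
  hmin M inferInstance rfl s hs

/- By saturation, `t` may be extended to an element `t∞` of an ultrapower with infinitely many
elements of an equidistant set on each side of `S(·, t∞)`. -/
theorem CMinimal.not_halfGraph (hmin : CMinimal L M r) (hC : IsCRelation (interpC L M r))
    {S : Set (Fin 2 → M)} (hS : (univ : Set M).Definable L S) {z t : ℕ → M} (hz : z.Injective)
    (hzC : IsEquidistant (interpC L M r) (range z)) :
    ¬ ∀ i n, ![z i, t n] ∈ S ↔ n ≤ i := by
  intro hgraph
  have : Nonempty M := ⟨z 0⟩
  let l : Ultrafilter ℕ := Filter.hyperfilter ℕ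
  obtain ⟨D, hD, hDt⟩ := Ultrapower.exists_definable₁ (l := l) hS t
  have hqf : QFDef (interpC L (Ultrapower M l) r) D :=
    hmin _ inferInstance Ultrapower.elementarilyEquivalent D hD
  let shift (i : ℕ) : Ultrapower M l := Ultrapower.mk l fun n => z (n + i)
  let const (i : ℕ) : Ultrapower M l := Ultrapower.mk l fun _ => z i
  have shift_injective : shift.Injective := fun i j h =>
    let ⟨_, hn⟩ := (Ultrapower.mk_eq_mk.1 h).exists
    Nat.add_left_cancel (hz hn)
  have const_injective : const.Injective := fun i j h =>
    let ⟨_, hn⟩ := (Ultrapower.mk_eq_mk.1 h).exists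
    hz hn
  have shift_mem (i : ℕ) : shift i ∈ D :=
    (hDt _).2 <| .of_forall fun n => (hgraph _ n).2 (Nat.le_add_right n i)
  have const_notMem (i : ℕ) : const i ∉ D := fun h => by
    have hlarge : ∀ᶠ n in l, i < n :=
      (Filter.eventually_gt_atTop i).filter_mono Nat.hyperfilter_le_atTop
    obtain ⟨n, hin, hn⟩ := (hlarge.and ((hDt _).1 h)).exists
    exact hin.not_ge ((hgraph i n).1 hn)
  rcases hqf.finite_inter_or_finite_sdiff (Ultrapower.isCRelation hC)
    (Ultrapower.isEquidistant hzC) with h | h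
  · exact h.not_infinite <| infinite_of_injective_forall_mem shift_injective fun i =>
      ⟨mem_image_of_mem _ fun _ => mem_range_self _, shift_mem i⟩
  · exact h.not_infinite <| infinite_of_injective_forall_mem const_injective fun i =>
      ⟨mem_image_of_mem _ fun _ => mem_range_self _, const_notMem i⟩

theorem exists_seq_of_frequently {C : M → M → M → Prop} [Nontrivial M] (hC : IsCRelation C)
    {R : M → M → Prop} {A : Set M} {e : M} {Q : M → Prop}
    (hA : ∀ z ∈ A, ∀ᶠ x in puncturedNhds C e, ¬ R z x)
    (hfreq : ∃ᶠ x in puncturedNhds C e, Q x ∧ ∃ z ∈ A, R z x) :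
    ∃ z t : ℕ → M, (∀ i, z i ∈ A ∧ Q (t i)) ∧ (∀ i, R (z i) (t i)) ∧ (∀ i, t i ≠ e) ∧
      (∀ i n, i < n → C (t i) (t n) e ∧ ∀ y ∈ node C (t n) e, y ≠ e → ¬ R (z i) y) := by
  obtain ⟨q, hq, hlt⟩ := exists_seq_of_forall_finset_exists
    (fun q : M × M => (q.1 ∈ A ∧ Q q.2) ∧ R q.1 q.2 ∧ q.2 ≠ e)
    (fun q q' => C q.2 q'.2 e ∧ ∀ y ∈ node C q'.2 e, y ≠ e → ¬ R q.1 y) (fun s hs => by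
      have hnear : ∀ᶠ x in puncturedNhds C e, ∀ q ∈ s,
          C q.2 x e ∧ ∀ y ∈ node C x e, y ≠ e → ¬ R q.1 y :=
        (Filter.eventually_all_finset s).2 fun q hq =>
          (eventually_rel hC (hs q hq).2.2).and (eventually_forall_node hC (hA _ (hs q hq).1.1))
      obtain ⟨x, ⟨hQ, z, hz, hzx⟩, hx, hxe⟩ :=
        (hfreq.and_eventually (hnear.and (eventually_ne C e))).exists
      exact ⟨(z, x), ⟨⟨hz, hQ⟩, hzx, hxe⟩, hx⟩)
  exact ⟨fun i => (q i).1, fun i => (q i).2, fun i => (hq i).1, fun i => (hq i).2.1,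
    fun i => (hq i).2.2, hlt⟩

theorem CMinimal.eventually_forall_not (hmin : CMinimal L M r) (hC : IsCRelation (interpC L M r))
    {R : M → M → Prop} (hR : (univ : Set M).Definable L {w : Fin 2 → M | R (w 0) (w 1)})
    {A : Set M} {e : M}
    (hsep : ∀ᶠ x in puncturedNhds (interpC L M r) e, ∀ z ∈ A, ∀ z' ∈ A, R z x → ¬ R z' x →
      A ⊆ node (interpC L M r) z z')
    (hA : ∀ z ∈ A, ∀ᶠ x in puncturedNhds (interpC L M r) e, ¬ R z x) :
    ∀ᶠ x in puncturedNhds (interpC L M r) e, ∀ z ∈ A, ¬ R z x := by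
  by_contra hfreq
  have hfreq' : ∃ᶠ x in puncturedNhds (interpC L M r) e, ∃ z ∈ A, R z x := by
    simpa only [Filter.Frequently, not_exists, not_and] using hfreq
  obtain ⟨x, -, hx⟩ := (hfreq'.and_eventually (eventually_ne _ e)).exists
  have : Nontrivial M := ⟨x, e, hx⟩
  obtain ⟨z, t, hzt, hRzt, hte, hlt⟩ :=
    exists_seq_of_frequently hC hA (hfreq'.and_eventually hsep |>.mono fun _ => And.symm)
  let S : Set (Fin 2 → M) :=
    {w | ∃ y, y ≠ e ∧ y ∈ node (interpC L M r) (w 1) e ∧ R (w 0) y}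
  have hS : (univ : Set M).Definable L S := by
    have hconst : (univ : Set M).DefinableFun L fun _ : Fin 2 ⊕ Fin 1 → M => e :=
      L.definableFun_const _ (mem_univ e)
    refine definable_exists (.inter ?_ (.inter ?_ ?_))
    · exact ((Set.DefinableFun.proj L).ofPred_eq hconst).compl
    · exact (definable_interpC (.proj L) (.proj L) hconst).compl
    · exact hR.preimage_comp ![Sum.inl 0, Sum.inr 0]
  have hgraph (i n : ℕ) : ![z i, t n] ∈ S ↔ n ≤ i := by
    refine ⟨fun ⟨y, hye, hy, hRy⟩ => not_lt.1 fun hin => (hlt i n hin).2 y hy hye hRy,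
      fun hni => ⟨t i, hte i, ?_, hRzt i⟩⟩
    rcases hni.eq_or_lt with rfl | hni
    · exact hC.irrefl
    · exact hC.asymm (hlt n i hni).1
  have hz : z.Injective := fun i j hij => le_antisymm
    ((hgraph j i).1 (hij ▸ (hgraph i i).2 le_rfl)) ((hgraph i j).1 (hij ▸ (hgraph j j).2 le_rfl))
  refine hmin.not_halfGraph hC hS hz ?_ hgraph
  have hA_node (i j : ℕ) (hij : i < j) : A ⊆ node (interpC L M r) (z j) (z i) :=
    (hzt j).2 _ (hzt j).1 _ (hzt i).1 (hRzt j) ((hlt i j hij).2 _ hC.irrefl (hte j))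
  rintro _ ⟨i, rfl⟩ _ ⟨j, rfl⟩ hne
  refine (range_subset_iff.2 fun k => (hzt k).1).trans ?_
  rcases lt_or_gt_of_ne (ne_of_apply_ne z hne) with hij | hji
  · exact fun w hw h => hA_node i j hij hw (hC.symm h)
  · exact hA_node j i hji

end CMinimal

namespace NiceFamily

section Tangency

variable {L : FirstOrder.Language.{u, u}} [L.Structure M] {C : M → M → M → Prop}
  (F : NiceFamily L M C) {g : M → M} {u v w x : M}

include F in
theorem nontrivial : Nontrivial M :=
  let ⟨a, b, hab, _⟩ := F.coneV
  ⟨a, b, hab⟩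

theorem rel_apply_iff (hx : x ∈ F.V \ {F.e}) (hu : u ∈ F.U) (hv : v ∈ F.U) (hw : w ∈ F.U) :
    C (F.f u x) (F.f v x) (F.f w x) ↔ C u v w :=
  let ⟨_, _, _, h⟩ := F.star x hx
  (h.2 u hu v hv w hw).symm

theorem eventually_mem (hC : IsCRelation C) : ∀ᶠ x in puncturedNhds C F.e, x ∈ F.V \ {F.e} :=
  (eventually_mem_cone hC F.coneV F.he).and (eventually_ne C F.e)

variable {F}

theorem mem_Tset (hC : IsCRelation C) :
    u ∈ F.Tset g ↔
      u ∈ F.U ∧ ∀ v ∈ F.U, ∀ᶠ x in puncturedNhds C F.e, ¬ C (F.f u x) (F.f v x) (g x) :=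
  and_congr_right fun _ => forall₂_congr fun _ _ =>
    (eventually_puncturedNhds_iff_exists_cone hC F.coneV F.he).symm

theorem notMem_Tset_of_frequently (hC : IsCRelation C) (hu : u ∈ F.U)
    (h : ∃ᶠ x in puncturedNhds C F.e, C (F.f v x) (F.f u x) (g x)) : v ∉ F.Tset g := fun hv =>
  h (((mem_Tset hC).1 hv).2 u hu)

theorem node_subset_Tset (hC : IsCRelation C) (hu : u ∈ F.Tset g) (hv : v ∈ F.Tset g) :
    node C u v ⊆ F.Tset g := by
  obtain ⟨huU, hu⟩ := (mem_Tset hC).1 hu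
  obtain ⟨hvU, hv⟩ := (mem_Tset hC).1 hv
  intro z hz
  have hzU : z ∈ F.U := hC.node_subset_cone F.coneU huU hvU hz
  refine (mem_Tset hC).2 ⟨hzU, fun w hw => ?_⟩
  filter_upwards [F.eventually_mem hC, hu w hw, hv u huU] with x hx huw hvu hzw
  have hz_node : F.f z x ∈ node C (F.f u x) (F.f v x) :=
    (F.rel_apply_iff hx hzU huU hvU).not.2 hz
  exact hC.not_rel_of_mem_node hz_node hvu ((hC.rel_or_rel hzw _).resolve_right huw)

end Tangency

section CMinimal

variable {L : FirstOrder.Language.{u, u}} [L.Structure M] {r : L.Relations 3}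
  {F : NiceFamily L M (interpC L M r)} {g : M → M} {u v : M}

theorem definable_interpC_apply (hg : DefinableFunOn L M F.V g) {α : Type*}
    {h₁ h₂ h₃ : (α → M) → M} (hh₁ : (univ : Set M).DefinableFun L h₁)
    (hh₂ : (univ : Set M).DefinableFun L h₂) (hh₃ : (univ : Set M).DefinableFun L h₃) :
    (univ : Set M).Definable L {v : α → M | h₁ v ∈ F.U ∧ h₂ v ∈ F.U ∧ h₃ v ∈ F.V ∧
      interpC L M r (F.f (h₁ v) (h₃ v)) (F.f (h₂ v) (h₃ v)) (g (h₃ v))} := by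
  have h : (univ : Set M).Definable L {v : Fin 3 → M | v 0 ∈ F.U ∧ v 1 ∈ F.U ∧ v 2 ∈ F.V ∧
      interpC L M r (F.f (v 0) (v 2)) (F.f (v 1) (v 2)) (g (v 2))} := by
    have hu := F.definable.preimage_comp ![(Sum.inl 0 : Fin 3 ⊕ Fin 3), Sum.inl 2, Sum.inr 0]
    have hv := F.definable.preimage_comp ![(Sum.inl 1 : Fin 3 ⊕ Fin 3), Sum.inl 2, Sum.inr 1]
    have hg := hg.preimage_comp ![(Sum.inl 2 : Fin 3 ⊕ Fin 3), Sum.inr 2]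
    have hC : (univ : Set M).Definable L {w : Fin 3 ⊕ Fin 3 → M |
        interpC L M r (w (Sum.inr 0)) (w (Sum.inr 1)) (w (Sum.inr 2))} :=
      definable_interpC (.proj L) (.proj L) (.proj L)
    convert! (hu.inter (hv.inter (hg.inter hC))).exists_of_finite using 1
    ext v
    constructor
    · rintro ⟨h₀, h₁, h₂, h⟩
      exact ⟨![F.f (v 0) (v 2), F.f (v 1) (v 2), g (v 2)],
        ⟨h₀, h₂, rfl⟩, ⟨h₁, h₂, rfl⟩, ⟨h₂, rfl⟩, h⟩
    · rintro ⟨y, ⟨h₀, h₂, hy₀⟩, ⟨h₁, -, hy₁⟩, ⟨-, hy₂⟩, h⟩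
      refine ⟨h₀, h₁, h₂, ?_⟩
      rwa [show F.f (v 0) (v 2) = y 0 from hy₀, show F.f (v 1) (v 2) = y 1 from hy₁,
        show g (v 2) = y 2 from hy₂]
  refine Set.Definable.preimage_map (F := fun v => ![h₁ v, h₂ v, h₃ v]) (fun i => ?_) h
  fin_cases i <;> assumption

theorem eventuallyConst_interpC_apply (hmin : CMinimal L M r) (hC : IsCRelation (interpC L M r))
    (hg : DefinableFunOn L M F.V g) (hu : u ∈ F.U) (hv : v ∈ F.U) :
    Filter.EventuallyConst (fun x => interpC L M r (F.f u x) (F.f v x) (g x))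
      (puncturedNhds (interpC L M r) F.e) := by
  have hD : (univ : Set M).Definable₁ L {x | u ∈ F.U ∧ v ∈ F.U ∧ x ∈ F.V ∧
      interpC L M r (F.f u x) (F.f v x) (g x)} :=
    definable_interpC_apply hg (L.definableFun_const _ (mem_univ u))
      (L.definableFun_const _ (mem_univ v)) (.proj L)
  refine ((hmin.qfDef hD).eventuallyConst_puncturedNhds hC F.e).congr ?_
  filter_upwards [F.eventually_mem hC] with x hx
  exact propext ⟨fun h => h.2.2.2, fun h => ⟨hu, hv, hx.1, h⟩⟩

theorem eventually_rel_of_mem_Tset (hmin : CMinimal L M r) (hC : IsCRelation (interpC L M r))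
    (hg : DefinableFunOn L M F.V g) (hu : u ∈ F.Tset g) (hv : v ∈ F.U \ F.Tset g) :
    ∀ᶠ x in puncturedNhds (interpC L M r) F.e, interpC L M r (F.f v x) (F.f u x) (g x) := by
  obtain ⟨hvU, hv⟩ := hv
  obtain ⟨w, hw, hvw⟩ : ∃ w ∈ F.U, ¬ ∀ᶠ x in puncturedNhds (interpC L M r) F.e,
      ¬ interpC L M r (F.f v x) (F.f w x) (g x) := by
    simpa only [mem_Tset hC, hvU, true_and, not_forall, exists_prop] using hv
  have hvw : ∀ᶠ x in puncturedNhds (interpC L M r) F.e,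
      interpC L M r (F.f v x) (F.f w x) (g x) :=
    (Filter.eventuallyConst_pred.1
      (eventuallyConst_interpC_apply hmin hC hg hvU hw)).resolve_right hvw
  filter_upwards [hvw, ((mem_Tset hC).1 hu).2 w hw] with x hvw huw
  exact (hC.rel_or_rel hvw _).resolve_right huw

theorem mem_Tset_iff_of_mem_Tset (hmin : CMinimal L M r) (hC : IsCRelation (interpC L M r))
    (hg : DefinableFunOn L M F.V g) (hu : u ∈ F.Tset g) :
    v ∈ F.Tset g ↔ v ∈ F.U ∧ ∀ᶠ x in puncturedNhds (interpC L M r) F.e,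
      ¬ interpC L M r (F.f v x) (F.f u x) (g x) := by
  have := F.nontrivial
  have := puncturedNhds_neBot hC F.e
  refine ⟨fun hv => ⟨hv.1, ((mem_Tset hC).1 hv).2 u hu.1⟩, fun ⟨hvU, hv⟩ => ?_⟩
  by_contra hvT
  exact (eventually_rel_of_mem_Tset hmin hC hg hu ⟨hvU, hvT⟩).frequently hv

theorem definable₁_Tset (hmin : CMinimal L M r) (hC : IsCRelation (interpC L M r))
    (hg : DefinableFunOn L M F.V g) (hu : u ∈ F.Tset g) :
    (univ : Set M).Definable₁ L (F.Tset g) := by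
  have := F.nontrivial
  let R (v x : M) : Prop :=
    v ∈ F.U ∧ u ∈ F.U ∧ x ∈ F.V ∧ interpC L M r (F.f v x) (F.f u x) (g x)
  have hR : (univ : Set M).Definable L {w : Fin 2 → M | ¬ R (w 0) (w 1)} :=
    (definable_interpC_apply hg (.proj L) (L.definableFun_const _ (mem_univ u)) (.proj L)).compl
  have hT : F.Tset g = F.U ∩ {v | ∀ᶠ x in puncturedNhds (interpC L M r) F.e, ¬ R v x} := by
    ext v
    refine (mem_Tset_iff_of_mem_Tset hmin hC hg hu).trans
      (and_congr_right fun hv => Filter.eventually_congr ?_)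
    filter_upwards [F.eventually_mem hC] with x hx
    simp only [R, hv, hu.1, hx.1, true_and]
  rw [hT]
  exact (definable₁_of_isCone F.coneU).inter
    (definable₁_eventually (R := fun v x => ¬ R v x) hC hR F.e)

theorem isBall_Tset (hmin : CMinimal L M r) (hC : IsCRelation (interpC L M r))
    (hg : DefinableFunOn L M F.V g) (hT : (F.Tset g).Nonempty) :
    IsBall (interpC L M r) (F.Tset g) := by
  obtain ⟨u, hu⟩ := hT
  refine (hmin.qfDef (definable₁_Tset hmin hC hg hu)).isBall hC hu
    (fun v hv => node_subset_Tset hC hu hv) (nonempty_compl.2 fun h => ?_)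
  exact hC.cone_ne_univ F.coneU (univ_subset_iff.1 (h ▸ fun v hv => hv.1))

theorem eventually_forall_delta (hmin : CMinimal L M r) (hC : IsCRelation (interpC L M r))
    (hg : DefinableFunOn L M F.V g) (hu : u ∈ F.Tset g) (hv : v ∈ F.Tset g) :
    ∀ᶠ x in puncturedNhds (interpC L M r) F.e, ∀ z ∈ node (interpC L M r) u v,
      Delta (interpC L M r) (F.f u x) (F.f z x) (g x) := by
  have hzT := node_subset_Tset hC hu hv
  have hvu := ((mem_Tset hC).1 hv).2 u hu.1
  let R (z x : M) : Prop := z ∈ F.U ∧ x ∈ F.V ∧ interpC L M r (F.f u x) (F.f z x) (g x)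
  have hR : (univ : Set M).Definable L {w : Fin 2 → M | R (w 0) (w 1)} := by
    simpa only [hu.1, true_and] using definable_interpC_apply (F := F) hg
      (L.definableFun_const (Fin 2) (mem_univ u)) (.proj L (i := 0)) (.proj L (i := 1))
  have hrel : ∀ᶠ x in puncturedNhds (interpC L M r) F.e, ∀ z ∈ node (interpC L M r) u v,
      ¬ interpC L M r (F.f z x) (F.f u x) (g x) := by
    filter_upwards [F.eventually_mem hC, hvu] with x hx hvu z hz
    exact hC.not_rel_of_mem_node ((F.rel_apply_iff hx (hzT hz).1 hu.1 hv.1).not.2 hz) hvu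
  have hnot : ∀ᶠ x in puncturedNhds (interpC L M r) F.e, ∀ z ∈ node (interpC L M r) u v,
      ¬ R z x := by
    refine hmin.eventually_forall_not hC hR ?_ fun z hz => ?_
    · filter_upwards [F.eventually_mem hC, hrel] with x hx hrel z hz z' hz' hzx hz'x w hw
      exact (F.rel_apply_iff hx (hzT hw).1 (hzT hz).1 (hzT hz').1).not.1 <|
        hC.mem_node_of_rel_of_not_rel (hrel w hw) hzx.2.2 fun h => hz'x ⟨(hzT hz').1, hx.1, h⟩
    · exact (((mem_Tset hC).1 hu).2 z (hzT hz).1).mono fun x hx h => hx h.2.2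
  filter_upwards [F.eventually_mem hC, hrel, hnot] with x hx hrel hnot z hz
  exact ⟨fun h => hnot z hz ⟨(hzT hz).1, hx.1, h⟩, hrel z hz⟩

theorem eventually_forall_rel (hmin : CMinimal L M r) (hC : IsCRelation (interpC L M r))
    (hg : DefinableFunOn L M F.V g) (hu : u ∈ F.Tset g) (hv : v ∈ F.U \ F.Tset g) :
    ∀ᶠ x in puncturedNhds (interpC L M r) F.e, ∀ z, interpC L M r u z v →
      interpC L M r (F.f z x) (F.f u x) (g x) := by
  filter_upwards [F.eventually_mem hC, eventually_rel_of_mem_Tset hmin hC hg hu hv]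
    with x hx hvu z hz
  have hzU : z ∈ F.U := hC.node_subset_cone F.coneU hu.1 hv.1 (hC.asymm hz)
  exact hC.rel_of_rel_of_rel ((F.rel_apply_iff hx hu.1 hzU hv.1).2 hz) hvu

theorem setOf_rel_subset_sdiff_Tset (hmin : CMinimal L M r) (hC : IsCRelation (interpC L M r))
    (hg : DefinableFunOn L M F.V g) (hu : u ∈ F.Tset g) (hv : v ∈ F.U \ F.Tset g) :
    {z | interpC L M r u z v} ⊆ F.U \ F.Tset g := by
  have := F.nontrivial
  have := puncturedNhds_neBot hC F.e
  exact fun z hz => ⟨hC.node_subset_cone F.coneU hu.1 hv.1 (hC.asymm hz),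
    notMem_Tset_of_frequently hC hu.1 <|
      ((eventually_forall_rel hmin hC hg hu hv).mono fun _ h => h z hz).frequently⟩

end CMinimal

end NiceFamily

theorem statement8 {L : FirstOrder.Language.{u, u}} {M : Type u} [L.Structure M]
    (r : L.Relations 3)
    (hC : IsCRelation (interpC L M r))
    (hmin : CMinimal L M r)
    (F : NiceFamily L M (interpC L M r))
    (g : M → M) (hg : DefinableFunOn L M F.V g)
    (hgV : Set.MapsTo g F.V F.V) (hge : g F.e = F.e) :
    (∀ u ∈ F.Tset g, ∀ v ∈ F.Tset g,
      node (interpC L M r) u v ⊆ F.Tset g ∧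
      ∃ W : Set M, IsCone (interpC L M r) W ∧ F.e ∈ W ∧ W ⊆ F.V ∧
        ∀ z ∈ node (interpC L M r) u v, ∀ x ∈ W,
          Delta (interpC L M r) (F.f u x) (F.f z x) (g x)) ∧
    (∀ u ∈ F.Tset g, ∀ v ∈ F.U \ F.Tset g,
      {z | interpC L M r u z v} ⊆ F.U \ F.Tset g ∧
      ∃ W : Set M, IsCone (interpC L M r) W ∧ F.e ∈ W ∧ W ⊆ F.V ∧
        ∀ z ∈ {z | interpC L M r u z v}, ∀ x ∈ W \ {F.e},
          interpC L M r (F.f z x) (F.f u x) (g x)) ∧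
    ((F.Tset g).Nonempty → IsBall (interpC L M r) (F.Tset g)) := by
  have hcone {p : M → Prop} := eventually_puncturedNhds_iff_exists_cone hC F.coneV F.he (p := p)
  refine ⟨fun u hu v hv => ⟨NiceFamily.node_subset_Tset hC hu hv, ?_⟩, fun u hu v hv =>
    ⟨NiceFamily.setOf_rel_subset_sdiff_Tset hmin hC hg hu hv, ?_⟩,
    NiceFamily.isBall_Tset hmin hC hg⟩
  · obtain ⟨W, hW, he, hWV, hΔ⟩ :=
      hcone.1 (NiceFamily.eventually_forall_delta hmin hC hg hu hv)
    refine ⟨W, hW, he, hWV, fun z hz x hx => ?_⟩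
    rcases eq_or_ne x F.e with rfl | hxe
    · have hzU : z ∈ F.U := (NiceFamily.node_subset_Tset hC hu hv hz).1
      simp only [Delta, F.fixe u hu.1, F.fixe z hzU, hge, hC.irrefl, not_false_eq_true, and_self]
    · exact hΔ x ⟨hx, hxe⟩ z hz
  · obtain ⟨W, hW, he, hWV, h⟩ :=
      hcone.1 (NiceFamily.eventually_forall_rel hmin hC hg hu hv)
    exact ⟨W, hW, he, hWV, fun z hz x hx => h x hx z hz⟩

end CMinPaper
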